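/- arXiv:0811.3859 — 5 statements merged into one kernel-verified Lean document; each statement's English description precedes it below -/
import Mathlib

section
/- Let X be a finite simple graph and let k ≥ 3 be an integer. Then the family of edge sets I = { A ⊆ E(X) : |A| ≤ k−1, or (|A| = k and A is not a star) } is the collection of independent sets of a matroid on E(X): it contains the empty set, is closed under taking subsets, and satisfies the augmentation axiom (if I₁, I₂ ∈ I with |I₁| < |I₂|, then there exists x ∈ I₂ \ I₁ with I₁ ∪ {x} ∈ I). -/
/-- A set of edges is a star if all its edges are incident to one common vertex. -/
def IsStar {V : Type*} (A : Finset (Sym2 V)) : Prop :=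
  ∃ v : V, ∀ e ∈ A, v ∈ e

/-- The independent sets of `St_k(X)`: sets `A` of edges of `X` with `|A| ≤ k-1`,
or `|A| = k` and `A` is not a star. -/
def StIndep {V : Type*} [Fintype V] [DecidableEq V] (X : SimpleGraph V)
    [DecidableRel X.Adj] (k : ℕ) (A : Finset (Sym2 V)) : Prop :=
  A ⊆ X.edgeFinset ∧ (A.card ≤ k - 1 ∨ (A.card = k ∧ ¬ IsStar A))

/-- For a finite simple graph `X` and `k ≥ 3`, the family
`I = { A ⊆ E(X) : |A| ≤ k−1, or (|A| = k and A is not a star) }` is the family of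
independent sets of a matroid on `E(X)`: it contains the empty set, is closed under
subsets, and satisfies the augmentation axiom. -/
theorem stmt_3 {V : Type*} [Fintype V] [DecidableEq V] (X : SimpleGraph V)
    [DecidableRel X.Adj] (k : ℕ) (hk : 3 ≤ k) :
    StIndep X k ∅ ∧
    (∀ A B : Finset (Sym2 V), StIndep X k B → A ⊆ B → StIndep X k A) ∧
    (∀ I₁ I₂ : Finset (Sym2 V), StIndep X k I₁ → StIndep X k I₂ → I₁.card < I₂.card →
      ∃ x ∈ I₂ \ I₁, StIndep X k (insert x I₁)) := by
  refine ⟨⟨by simp, Or.inl (by simp)⟩, ?_, ?_⟩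
  · rintro A B ⟨hB, hc⟩ hAB
    refine ⟨hAB.trans hB, ?_⟩
    have hle := Finset.card_le_card hAB
    by_cases h : A.card ≤ k - 1
    · exact Or.inl h
    · have hE : A = B := Finset.eq_of_subset_of_card_le hAB (by omega)
      rw [hE]
      exact hc
  · rintro I₁ I₂ ⟨h1, c1⟩ ⟨h2, c2⟩ hlt
    obtain ⟨x, hx2, hx1⟩ := Finset.exists_mem_notMem_of_card_lt_card hlt
    by_cases hs : I₁.card + 1 ≤ k - 1
    · refine ⟨x, by simp [hx1, hx2], ?_, Or.inl ?_⟩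
      · exact Finset.insert_subset (h2 hx2) h1
      · rw [Finset.card_insert_of_notMem hx1]
        exact hs
    · have hc2 : I₂.card = k ∧ ¬ IsStar I₂ := by
        rcases c2 with c2 | c2
        · omega
        · exact c2
      have hc1 : I₁.card = k - 1 := by omega
      by_contra hcon
      push Not at hcon
      have hstar : ∀ y ∈ I₂, y ∉ I₁ → IsStar (insert y I₁) := by
        intro y hy2 hy1
        by_contra hns
        refine hcon y (by simp [hy1, hy2]) ⟨Finset.insert_subset (h2 hy2) h1, Or.inr ⟨?_, hns⟩⟩
        rw [Finset.card_insert_of_notMem hy1]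
        omega
      obtain ⟨a, ha, b, hb, hab⟩ := Finset.one_lt_card.mp (show 1 < I₁.card by omega)
      obtain ⟨v, hv⟩ := hstar x hx2 hx1
      refine hc2.2 ⟨v, fun y hy2 => ?_⟩
      by_cases hy1 : y ∈ I₁
      · exact hv y (Finset.mem_insert_of_mem hy1)
      · obtain ⟨w, hw⟩ := hstar y hy2 hy1
        have hvw : v = w := by
          by_contra hne
          have e1 := (Sym2.mem_and_mem_iff hne).mp
            ⟨hv a (Finset.mem_insert_of_mem ha), hw a (Finset.mem_insert_of_mem ha)⟩
          have e2 := (Sym2.mem_and_mem_iff hne).mp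
            ⟨hv b (Finset.mem_insert_of_mem hb), hw b (Finset.mem_insert_of_mem hb)⟩
          exact hab (e1.trans e2.symm)
        rw [hvw]
        exact hw y (Finset.mem_insert_self _ _)
end

section
/- Let k ≥ 3 be an integer and let X₁ and X₂ be finite simple graphs each of minimum degree at least k. Then X₁ and X₂ are isomorphic as graphs if and only if the matroids St_k(X₁) and St_k(X₂) are isomorphic, i.e., if and only if there is a bijection σ : E(X₁) → E(X₂) such that for every set A ⊆ E(X₁), A is independent in St_k(X₁) if and only if σ(A) is independent in St_k(X₂) (equivalently: for every k-element set A of edges, A is a star in X₁ if and only if σ(A) is a star in X₂). -/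
/-- Independence in `St_k(X)` for a set `A` of edges of `X` (as a set of elements of
the edge set): `|A| ≤ k−1`, or `|A| = k` and `A` is not a star. -/
def StIndepSet {V : Type*} (X : SimpleGraph V) (k : ℕ) (A : Set X.edgeSet) : Prop :=
  A.ncard ≤ k - 1 ∨ (A.ncard = k ∧ ¬ ∃ v : V, ∀ e ∈ A, v ∈ (e : Sym2 V))


theorem st_two_edges {V : Type*} {e e' : Sym2 V} (hne : e ≠ e') {v w : V}
    (h1 : v ∈ e) (h2 : v ∈ e') (h3 : w ∈ e) (h4 : w ∈ e') : v = w := by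
  by_contra h
  exact hne (((Sym2.mem_and_mem_iff h).1 ⟨h1, h3⟩).trans ((Sym2.mem_and_mem_iff h).1 ⟨h2, h4⟩).symm)

theorem st_inc_card {V : Type*} [Fintype V] (X : SimpleGraph V) [DecidableRel X.Adj] (v : V) :
    ({e : X.edgeSet | v ∈ (e : Sym2 V)} : Set X.edgeSet).ncard = X.degree v := by
  classical
  rw [← Set.ncard_image_of_injective _ Subtype.val_injective, ← X.card_incidenceFinset_eq_degree,
    ← Set.ncard_coe_finset]
  congr 1
  ext e
  simp [SimpleGraph.incidenceSet, and_comm]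

theorem st_star {V₁ V₂ : Type*} (X₁ : SimpleGraph V₁) (X₂ : SimpleGraph V₂)
    (k : ℕ) (hk : 3 ≤ k) (σ : X₁.edgeSet ≃ X₂.edgeSet)
    (h : ∀ A : Set X₁.edgeSet, StIndepSet X₁ k A ↔ StIndepSet X₂ k (σ '' A))
    (A : Set X₁.edgeSet) (hA : A.ncard = k) :
    (∃ v : V₁, ∀ e ∈ A, v ∈ (e : Sym2 V₁)) ↔ ∃ w : V₂, ∀ e ∈ A, w ∈ (σ e : Sym2 V₂) := by
  have h' := h A
  unfold StIndepSet at h'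
  rw [Set.ncard_image_of_injective _ σ.injective, hA] at h'
  have hk' : ¬ k ≤ k - 1 := by omega
  simp only [hk', false_or, true_and, not_iff_not, Set.forall_mem_image] at h'
  exact h'

theorem st_map {V₁ V₂ : Type*} [Fintype V₁]
    (X₁ : SimpleGraph V₁) (X₂ : SimpleGraph V₂) [DecidableRel X₁.Adj]
    (k : ℕ) (hk : 3 ≤ k) (hd₁ : ∀ v, k ≤ X₁.degree v) (σ : X₁.edgeSet ≃ X₂.edgeSet)
    (h : ∀ A : Set X₁.edgeSet, A.ncard = k →
      (∃ v : V₁, ∀ e ∈ A, v ∈ (e : Sym2 V₁)) → ∃ w : V₂, ∀ e ∈ A, w ∈ (σ e : Sym2 V₂)) (v : V₁) :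
    ∃ w : V₂, ∀ e : X₁.edgeSet, v ∈ (e : Sym2 V₁) → w ∈ (σ e : Sym2 V₂) := by
  classical
  have hc := hd₁ v
  rw [← st_inc_card] at hc
  obtain ⟨A, hAs, hA⟩ := Set.exists_subset_card_eq hc
  obtain ⟨w, hw⟩ := h A hA ⟨v, fun e he => hAs he⟩
  refine ⟨w, fun e he => ?_⟩
  by_cases heA : e ∈ A
  · exact hw e heA
  have hfin : A.Finite := Set.toFinite A
  obtain ⟨a, ha, b, hb, c, hcc, hab, hac, hbc⟩ := (Set.two_lt_ncard (hs := hfin)).1 (by omega : 2 < A.ncard)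
  obtain ⟨w', hw'⟩ := h (insert e (A \ {a})) (by
      rw [Set.ncard_exchange heA ha, hA]) ⟨v, by
      rintro x (rfl | hx)
      · exact he
      · exact hAs hx.1⟩
  have hbb : b ∈ insert e (A \ {a}) := Or.inr ⟨hb, fun h => hab h.symm⟩
  have hcb : c ∈ insert e (A \ {a}) := Or.inr ⟨hcc, fun h => hac h.symm⟩
  have : w = w' := st_two_edges (e := (σ b : Sym2 V₂)) (e' := (σ c : Sym2 V₂))
    (fun h => hbc (σ.injective (Subtype.ext h)))
    (hw b hb) (hw c hcc) (hw' b hbb) (hw' c hcb)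
  rw [this]
  exact hw' e (Or.inl rfl)

theorem st_inv {V : Type*} [Fintype V] (X : SimpleGraph V) [DecidableRel X.Adj]
    (k : ℕ) (hk : 3 ≤ k) (hd : ∀ v, k ≤ X.degree v) (v w : V)
    (h : ∀ e : X.edgeSet, v ∈ (e : Sym2 V) → w ∈ (e : Sym2 V)) : v = w := by
  classical
  have hc := hd v
  rw [← st_inc_card] at hc
  obtain ⟨a, ha, b, hb, hab⟩ := (Set.one_lt_ncard (hs := Set.toFinite _)).1
    (by omega : 1 < ({e : X.edgeSet | v ∈ (e : Sym2 V)} : Set X.edgeSet).ncard)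
  exact st_two_edges (fun h => hab (Subtype.ext h)) ha hb (h a ha) (h b hb)

theorem st_adj {V₁ V₂ : Type*} (X₁ : SimpleGraph V₁) (X₂ : SimpleGraph V₂)
    (σ : X₁.edgeSet ≃ X₂.edgeSet) (f : V₁ → V₂) (hinj : Function.Injective f)
    (hf : ∀ v, ∀ e : X₁.edgeSet, v ∈ (e : Sym2 V₁) → f v ∈ (σ e : Sym2 V₂)) {v w : V₁}
    (h : X₁.Adj v w) : X₂.Adj (f v) (f w) := by
  have h1 := hf v ⟨s(v, w), h⟩ (Sym2.mem_mk_left _ _)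
  have h2 := hf w ⟨s(v, w), h⟩ (Sym2.mem_mk_right _ _)
  have h3 := (Sym2.mem_and_mem_iff (hinj.ne h.ne)).1 ⟨h1, h2⟩
  have h4 := (σ ⟨s(v, w), h⟩).2
  rw [h3] at h4
  exact h4

theorem stmt_4 {V₁ V₂ : Type*} [Fintype V₁] [Fintype V₂]
    (X₁ : SimpleGraph V₁) (X₂ : SimpleGraph V₂) [DecidableRel X₁.Adj] [DecidableRel X₂.Adj]
    (k : ℕ) (hk : 3 ≤ k) (hd₁ : ∀ v, k ≤ X₁.degree v) (hd₂ : ∀ v, k ≤ X₂.degree v) :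
    Nonempty (X₁ ≃g X₂) ↔
      ∃ σ : X₁.edgeSet ≃ X₂.edgeSet,
        ∀ A : Set X₁.edgeSet, StIndepSet X₁ k A ↔ StIndepSet X₂ k (σ '' A) := by
  constructor
  · rintro ⟨φ⟩
    refine ⟨φ.mapEdgeSet, fun A => ?_⟩
    unfold StIndepSet
    rw [Set.ncard_image_of_injective _ φ.mapEdgeSet.injective]
    simp only [Set.forall_mem_image]
    have key : (∃ v : V₁, ∀ e ∈ A, v ∈ (e : Sym2 V₁)) ↔
        ∃ v : V₂, ∀ ⦃e⦄, e ∈ A → v ∈ (φ.mapEdgeSet e : Sym2 V₂) := by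
      have hm : ∀ (v : V₁) (e : X₁.edgeSet),
          φ v ∈ (φ.mapEdgeSet e : Sym2 V₂) ↔ v ∈ (e : Sym2 V₁) := by
        intro v e
        change φ v ∈ Sym2.map φ e.1 ↔ _
        simp [Sym2.mem_map]
      rw [φ.surjective.exists]
      simp only [hm]
    rw [key]
  · rintro ⟨σ, h⟩
    have hs := st_star X₁ X₂ k hk σ h
    choose f hf using st_map X₁ X₂ k hk hd₁ σ (fun A hA => (hs A hA).1)
    choose g hg using st_map X₂ X₁ k hk hd₂ σ.symm (fun A hA hst => by
      have := (hs (σ.symm '' A) (by rw [Set.ncard_image_of_injective _ σ.symm.injective, hA])).2 (by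
        obtain ⟨v, hv⟩ := hst
        refine ⟨v, ?_⟩
        rintro _ ⟨e, he, rfl⟩
        simpa using hv e he)
      obtain ⟨w, hw⟩ := this
      exact ⟨w, fun e he => hw _ ⟨e, he, rfl⟩⟩)
    have hgf : ∀ v, v = g (f v) := fun v => st_inv X₁ k hk hd₁ _ _ (fun e he => by
      simpa using hg (f v) (σ e) (hf v e he))
    have hfg : ∀ v, v = f (g v) := fun v => st_inv X₂ k hk hd₂ _ _ (fun e he => by
      simpa using hf (g v) (σ.symm e) (hg v e he))
    have fi : Function.Injective f := Function.LeftInverse.injective (fun v => (hgf v).symm)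
    have gi : Function.Injective g := Function.LeftInverse.injective (fun v => (hfg v).symm)
    refine ⟨⟨⟨f, g, fun v => (hgf v).symm, fun v => (hfg v).symm⟩, ?_⟩⟩
    intro v w
    refine ⟨fun hh => ?_, fun hh => st_adj X₁ X₂ σ f fi hf hh⟩
    have := st_adj X₂ X₁ σ.symm g gi hg hh
    simpa [← hgf] using this
end

section
/- Let k ≥ 3 be an integer and let X be a finite simple graph of minimum degree at least k. Then a set H ⊆ E(X) is a dependent hyperplane of the matroid St_k(X) (a hyperplane that is not an independent set) if and only if there is a vertex v of X such that H is exactly the set of all edges of X incident to v. -/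
/-- The rank of a set `A` of edges in `St_k(X)`: the maximum size of an independent
subset of `A`. -/
noncomputable def stRank {V : Type*} [Fintype V] [DecidableEq V] (X : SimpleGraph V)
    [DecidableRel X.Adj] (k : ℕ) (A : Finset (Sym2 V)) : ℕ :=
  sSup {n | ∃ B ⊆ A, StIndep X k B ∧ B.card = n}

/-- A hyperplane of `St_k(X)`: a maximal nonspanning set of edges, i.e. a set of edges
of rank strictly less than the rank of the matroid, all of whose proper supersets
(inside the edge set) have full rank. -/
def StHyperplane {V : Type*} [Fintype V] [DecidableEq V] (X : SimpleGraph V)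
    [DecidableRel X.Adj] (k : ℕ) (H : Finset (Sym2 V)) : Prop :=
  H ⊆ X.edgeFinset ∧ stRank X k H < stRank X k X.edgeFinset ∧
    ∀ H' : Finset (Sym2 V), H ⊂ H' → H' ⊆ X.edgeFinset →
      stRank X k H' = stRank X k X.edgeFinset

theorem common_unique {V : Type*} {e f : Sym2 V} (hef : e ≠ f) {a b : V}
    (h1 : a ∈ e) (h2 : a ∈ f) (h3 : b ∈ e) (h4 : b ∈ f) : a = b := by
  by_contra hab
  exact hef (((Sym2.mem_and_mem_iff hab).1 ⟨h1, h3⟩).trans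
    ((Sym2.mem_and_mem_iff hab).1 ⟨h2, h4⟩).symm)

theorem exists_nonstar {V : Type*} [DecidableEq V] (A : Finset (Sym2 V)) (k : ℕ) (hk : 3 ≤ k)
    (hc : k ≤ A.card) (hA : ¬ IsStar A) : ∃ B ⊆ A, B.card = k ∧ ¬ IsStar B := by
  obtain ⟨e, he, f, hf, hef⟩ := Finset.one_lt_card.1 (show 1 < A.card by omega)
  have key : ∃ g ∈ A, ¬ IsStar ({e, f, g} : Finset (Sym2 V)) := by
    by_cases h : ∃ a, a ∈ e ∧ a ∈ f
    · obtain ⟨a, hae, haf⟩ := h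
      have : ∃ g ∈ A, a ∉ g := by
        by_contra! hcon
        exact hA ⟨a, hcon⟩
      obtain ⟨g, hg, hag⟩ := this
      refine ⟨g, hg, ?_⟩
      rintro ⟨b, hb⟩
      have hab := common_unique hef hae haf (hb e (by simp)) (hb f (by simp))
      subst hab
      exact hag (hb g (by simp))
    · refine ⟨e, he, ?_⟩
      rintro ⟨b, hb⟩
      exact h ⟨b, hb e (by simp), hb f (by simp)⟩
  obtain ⟨g, hg, hn⟩ := key
  have hsub : ({e, f, g} : Finset (Sym2 V)) ⊆ A := by
    intro x hx
    simp only [Finset.mem_insert, Finset.mem_singleton] at hx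
    rcases hx with rfl | rfl | rfl <;> assumption
  obtain ⟨B, h1, h2, h3⟩ := Finset.exists_subsuperset_card_eq hsub
    (Finset.card_le_three.trans hk) hc
  exact ⟨B, h2, h3, fun ⟨v, hv⟩ => hn ⟨v, fun x hx => hv x (h1 hx)⟩⟩

theorem stRank_spec {V : Type*} [Fintype V] [DecidableEq V] (X : SimpleGraph V)
    [DecidableRel X.Adj] (k : ℕ) (hk : 3 ≤ k) (A : Finset (Sym2 V)) (hA : A ⊆ X.edgeFinset) :
    stRank X k A ≤ k ∧ (stRank X k A = k ↔ k ≤ A.card ∧ ¬ IsStar A) := by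
  have hb : ∀ n ∈ {n | ∃ B ⊆ A, StIndep X k B ∧ B.card = n}, n ≤ k := by
    rintro n ⟨B, -, ⟨-, h⟩, rfl⟩
    omega
  have hne : {n | ∃ B ⊆ A, StIndep X k B ∧ B.card = n}.Nonempty :=
    ⟨0, ∅, by simp, ⟨by simp, by simp⟩, by simp⟩
  have hle : stRank X k A ≤ k := csSup_le hne hb
  refine ⟨hle, ?_, ?_⟩
  · intro h
    have hm := Nat.sSup_mem hne ⟨k, hb⟩
    change stRank X k A ∈ _ at hm
    rw [h] at hm
    obtain ⟨B, hBA, ⟨-, h⟩, hB⟩ := hm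
    rcases h with h | ⟨-, h⟩
    · omega
    · exact ⟨hB ▸ Finset.card_le_card hBA,
        fun ⟨v, hv⟩ => h ⟨v, fun x hx => hv x (hBA hx)⟩⟩
  · rintro ⟨h1, h2⟩
    obtain ⟨B, hBA, hB, hs⟩ := exists_nonstar A k hk h1 h2
    exact le_antisymm hle
      (le_csSup ⟨k, hb⟩ ⟨B, hBA, ⟨hBA.trans hA, Or.inr ⟨hB, hs⟩⟩, hB⟩)

theorem mem_inc {V : Type*} [Fintype V] [DecidableEq V] (X : SimpleGraph V)
    [DecidableRel X.Adj] (v : V) (e : Sym2 V) :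
    e ∈ X.incidenceFinset v ↔ e ∈ X.edgeFinset ∧ v ∈ e := by
  simp [SimpleGraph.incidenceSet]

/-- For `k ≥ 3` and a finite simple graph `X` of minimum degree at
least `k`, a set `H` of edges is a dependent hyperplane of `St_k(X)` iff there is a
vertex `v` such that `H` is exactly the set of all edges of `X` incident to `v`. -/
theorem stmt_6 {V : Type*} [Fintype V] [DecidableEq V] (X : SimpleGraph V)
    [DecidableRel X.Adj] (k : ℕ) (hk : 3 ≤ k) (hd : ∀ v, k ≤ X.degree v)
    (H : Finset (Sym2 V)) :
    (StHyperplane X k H ∧ ¬ StIndep X k H) ↔ ∃ v : V, H = X.incidenceFinset v := by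
  have hinc : ∀ v, X.incidenceFinset v ⊆ X.edgeFinset := fun v e he => ((mem_inc X v e).1 he).1
  have hcard : ∀ v, k ≤ (X.incidenceFinset v).card := fun v => by
    rw [X.card_incidenceFinset_eq_degree]; exact hd v
  have hstar : ∀ v, IsStar (X.incidenceFinset v) := fun v => ⟨v, fun e he => ((mem_inc X v e).1 he).2⟩
  have huniq : ∀ v w, (∀ e ∈ X.incidenceFinset v, w ∈ e) → v = w := by
    intro v w h
    obtain ⟨e, he, f, hf, hef⟩ := Finset.one_lt_card.1
      (show 1 < (X.incidenceFinset v).card by have := hcard v; omega)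
    exact common_unique hef ((mem_inc X v e).1 he).2 ((mem_inc X v f).1 hf).2 (h e he) (h f hf)
  have hE : V → stRank X k X.edgeFinset = k := by
    intro v
    refine (stRank_spec X k hk _ subset_rfl).2.2 ⟨(hcard v).trans (Finset.card_le_card (hinc v)), ?_⟩
    rintro ⟨w, hw⟩
    have h1 : 0 < X.degree w := by have := hd w; omega
    obtain ⟨u, hu⟩ := (X.degree_pos_iff_exists_adj w).1 h1
    exact hu.ne (huniq u w fun e he => hw e (hinc u he)).symm
  constructor
  · rintro ⟨⟨hH, hlt, hmax⟩, hdep⟩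
    have hc : k ≤ H.card := by
      by_contra hc
      exact hdep ⟨hH, Or.inl (by omega)⟩
    have hs : IsStar H := by
      by_contra hs
      rw [(stRank_spec X k hk _ hH).2.2 ⟨hc, hs⟩] at hlt
      have := (stRank_spec X k hk _ (subset_refl X.edgeFinset)).1
      omega
    obtain ⟨v, hv⟩ := hs
    refine ⟨v, ?_⟩
    have hsub : H ⊆ X.incidenceFinset v := fun e he => (mem_inc X v e).2 ⟨hH he, hv e he⟩
    by_contra hne
    have := hmax _ (Finset.ssubset_iff_subset_ne.2 ⟨hsub, hne⟩) (hinc v)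
    rw [hE v] at this
    exact ((stRank_spec X k hk _ (hinc v)).2.1 this).2 (hstar v)
  · rintro ⟨v, rfl⟩
    refine ⟨⟨hinc v, ?_, ?_⟩, ?_⟩
    · rw [hE v]
      exact lt_of_le_of_ne (stRank_spec X k hk _ (hinc v)).1
        fun h => ((stRank_spec X k hk _ (hinc v)).2.1 h).2 (hstar v)
    · intro H' hss hH'
      rw [hE v]
      refine (stRank_spec X k hk _ hH').2.2 ⟨(hcard v).trans (Finset.card_le_card hss.1), ?_⟩
      rintro ⟨w, hw⟩
      have := huniq v w fun e he => hw e (hss.1 he)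
      subst this
      exact hss.2 fun e he => (mem_inc X v e).2 ⟨hH' he, hw e he⟩
    · rintro ⟨-, h | ⟨-, h⟩⟩
      · have := hcard v
        omega
      · exact h (hstar v)
end

section
/- Let X be a finite simple graph, let W be the cycle space of X over ZMod 2, let B be a cycle basis of X, and let π be a permutation of the edge set E(X), inducing a linear automorphism P_π of the space of functions E(X) → ZMod 2 by permuting coordinates. Then π is an automorphism of the graphic matroid of X — that is, for every set C ⊆ E(X), C is the edge set of a cycle of X if and only if π(C) is the edge set of a cycle of X — if and only if the image of B under P_π is a cycle basis of X. -/
/-- The indicator vector (over `ZMod 2`) of the edge set of a closed walk `w`, as a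
function `E(X) → ZMod 2`. -/
def cycleVec {V : Type*} [DecidableEq V] (X : SimpleGraph V) {v : V} (w : X.Walk v v) :
    X.edgeSet → ZMod 2 :=
  fun e => if (e : Sym2 V) ∈ w.edges then 1 else 0

/-- The cycle space of `X` over `ZMod 2`: the span, inside `E(X) → ZMod 2`, of the
indicator vectors of edge sets of cycles of `X`. -/
def cycleSpace {V : Type*} [DecidableEq V] (X : SimpleGraph V) :
    Submodule (ZMod 2) (X.edgeSet → ZMod 2) :=
  Submodule.span (ZMod 2) {f | ∃ (v : V) (w : X.Walk v v), w.IsCycle ∧ f = cycleVec X w}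

/-- A cycle basis of `X`: a basis of the cycle space of `X`. -/
def IsCycleBasis {V : Type*} [DecidableEq V] (X : SimpleGraph V)
    (B : Set (X.edgeSet → ZMod 2)) : Prop :=
  B ⊆ (cycleSpace X : Set (X.edgeSet → ZMod 2)) ∧
    LinearIndependent (ZMod 2) ((↑) : B → (X.edgeSet → ZMod 2)) ∧
    Submodule.span (ZMod 2) B = cycleSpace X

/-- `C` is the edge set of a cycle of `X` (as a set of elements of the edge set). -/
def IsCycleEdgeSet {V : Type*} (X : SimpleGraph V) (C : Set X.edgeSet) : Prop :=
  ∃ (v : V) (w : X.Walk v v), w.IsCycle ∧ C = {e : X.edgeSet | (e : Sym2 V) ∈ w.edges}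

open Classical in
theorem aux_orth {V : Type*} [Fintype V] [DecidableEq V] (X : SimpleGraph V)
    (c : Sym2 V → ZMod 2) (σ : V → ZMod 2) (hc : ∀ u v, c s(u, v) = σ u + σ v)
    (g : X.edgeSet → ZMod 2) (hg : g ∈ cycleSpace X) :
    ∑ e : X.edgeSet, g e * c e = 0 := by
  have walk : ∀ {u v : V} (w : X.Walk u v), (w.edges.map c).sum = σ u + σ v := by
    intro u v w
    induction w with
    | nil => simp [CharTwo.add_self_eq_zero]
    | cons h p ih =>
      rename_i a b d
      simp only [SimpleGraph.Walk.edges_cons, List.map_cons, List.sum_cons, ih, hc]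
      have := CharTwo.add_self_eq_zero (σ b)
      linear_combination this
  unfold cycleSpace at hg
  induction hg using Submodule.span_induction with
  | mem x hx =>
    obtain ⟨v, w, hw, rfl⟩ := hx
    have h1 := walk w
    rw [CharTwo.add_self_eq_zero, ← List.sum_toFinset _ hw.isCircuit.isTrail.edges_nodup] at h1
    rw [← h1]
    simp only [cycleVec, ite_mul, one_mul, zero_mul]
    rw [← Finset.sum_filter]
    refine Finset.sum_bij (fun e _ => (e : Sym2 V)) ?_ ?_ ?_ ?_
    · intro a ha; simpa using ha
    · intro a _ b _ h; exact Subtype.ext h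
    · intro b hb
      have hb' : b ∈ w.edges := by simpa using hb
      exact ⟨⟨b, w.edges_subset_edgeSet hb'⟩, by simpa using hb', rfl⟩
    · intros; rfl
  | zero => simp
  | add x y _ _ hx hy => simp [add_mul, Finset.sum_add_distrib, hx, hy]
  | smul a x _ hx => simp [mul_assoc, ← Finset.mul_sum, hx]

def auxCut {V : Type*} (σ : V → ZMod 2) : Sym2 V → ZMod 2 :=
  Sym2.lift ⟨fun u v => σ u + σ v, fun _ _ => add_comm _ _⟩

/-- If only one edge of the support crosses a cut, contradiction. -/
theorem aux_single {V : Type*} [Fintype V] [DecidableEq V] (X : SimpleGraph V)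
    (σ : V → ZMod 2) (g : X.edgeSet → ZMod 2) (hg : g ∈ cycleSpace X)
    (e : X.edgeSet) (he : auxCut σ e = 1)
    (h : ∀ e' : X.edgeSet, e' ≠ e → g e' ≠ 0 → auxCut σ e' = 0) : g e = 0 := by
  classical
  have h1 := aux_orth X (auxCut σ) σ (fun _ _ => rfl) g hg
  rw [Finset.sum_eq_single e] at h1
  · simpa [he] using h1
  · intro b _ hb
    by_cases hgb : g b = 0
    · simp [hgb]
    · simp [h b hb hgb]
  · simp

theorem aux_path {V : Type*} [Fintype V] [DecidableEq V] (X : SimpleGraph V)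
    (g : X.edgeSet → ZMod 2) (hg : g ∈ cycleSpace X) {u v : V} (p : X.Walk u v)
    (hp : p.IsPath) (hs : ∀ e : X.edgeSet, g e ≠ 0 → (e : Sym2 V) ∈ p.edges) : g = 0 := by
  classical
  induction p with
  | nil => funext e; by_contra h; simpa using hs e h
  | cons h p ih =>
    rename_i a b d
    rw [SimpleGraph.Walk.cons_isPath_iff] at hp
    have key : g ⟨s(a, b), h⟩ = 0 := by
      refine aux_single X (Pi.single a 1) g hg _ ?_ ?_
      · have : b ≠ a := h.ne'
        simp [auxCut, Pi.single_apply, this]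
      · rintro ⟨e', he'⟩ hne hge
        have := hs _ hge
        simp only [SimpleGraph.Walk.edges_cons, List.mem_cons] at this
        rcases this with h2 | h2
        · exact absurd (Subtype.ext h2) hne
        · induction e' using Sym2.ind with
          | _ x y =>
            have hx := p.fst_mem_support_of_mem_edges h2
            have hy := p.snd_mem_support_of_mem_edges h2
            have hxa : x ≠ a := by rintro rfl; exact hp.2 hx
            have hya : y ≠ a := by rintro rfl; exact hp.2 hy
            simp [auxCut, Pi.single_apply, hxa, hya]
    refine ih hp.1 ?_
    intro e he
    have := hs e he
    simp only [SimpleGraph.Walk.edges_cons, List.mem_cons] at this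
    rcases this with h2 | h2
    · have : e = ⟨s(a, b), h⟩ := Subtype.ext h2
      rw [this] at he; exact absurd key he
    · exact h2

theorem aux_min {V : Type*} [Fintype V] [DecidableEq V] (X : SimpleGraph V)
    (g : X.edgeSet → ZMod 2) (hg : g ∈ cycleSpace X) (hg0 : g ≠ 0) {v : V} (w : X.Walk v v)
    (hw : w.IsCycle) (hs : ∀ e : X.edgeSet, g e ≠ 0 → (e : Sym2 V) ∈ w.edges) :
    g = cycleVec X w := by
  have hf : cycleVec X w ∈ cycleSpace X := Submodule.subset_span ⟨v, w, hw, rfl⟩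
  cases w with
  | nil => simp at hw
  | cons h p =>
    rename_i b
    rw [SimpleGraph.Walk.cons_isCycle_iff] at hw
    by_cases h0 : g ⟨s(v, b), h⟩ = 0
    · refine absurd (aux_path X g hg p hw.1 ?_) hg0
      intro e he
      have := hs e he
      simp only [SimpleGraph.Walk.edges_cons, List.mem_cons] at this
      rcases this with h2 | h2
      · have : e = ⟨s(v, b), h⟩ := Subtype.ext h2
        rw [this] at he; exact absurd h0 he
      · exact h2
    · have h1 : g ⟨s(v, b), h⟩ = 1 := by
        generalize g ⟨s(v, b), h⟩ = t at h0
        revert t; decide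
      rw [← sub_eq_zero]
      refine aux_path X _ (Submodule.sub_mem _ hg hf) p hw.1 ?_
      intro e he
      by_contra hep
      apply he
      by_cases h2 : (e : Sym2 V) = s(v, b)
      · have : e = ⟨s(v, b), h⟩ := Subtype.ext h2
        subst this
        simp [h1, cycleVec]
      · have h3 : (e : Sym2 V) ∉ (SimpleGraph.Walk.cons h p).edges := by
          simp [h2, hep]
        have : g e = 0 := by
          by_contra h4; exact h3 (hs e h4)
        simp only [Pi.sub_apply, this, cycleVec, if_neg h3, sub_zero]

theorem aux_exists {V : Type*} [Fintype V] [DecidableEq V] (X : SimpleGraph V)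
    (g : X.edgeSet → ZMod 2) (hg : g ∈ cycleSpace X) (hg0 : g ≠ 0) :
    ∃ (v : V) (w : X.Walk v v), w.IsCycle ∧
      ∀ e : X.edgeSet, (e : Sym2 V) ∈ w.edges → g e ≠ 0 := by
  classical
  set G := SimpleGraph.fromEdgeSet {e : Sym2 V | ∃ h : e ∈ X.edgeSet, g ⟨e, h⟩ ≠ 0} with hG
  have hadj : ∀ x y, G.Adj x y ↔ ∃ h : X.Adj x y, g ⟨s(x, y), h⟩ ≠ 0 := by
    intro x y
    simp only [hG, SimpleGraph.fromEdgeSet_adj, Set.mem_ofPred_eq, SimpleGraph.mem_edgeSet]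
    constructor
    · rintro ⟨h, _⟩; exact h
    · rintro ⟨h, h'⟩; exact ⟨⟨h, h'⟩, h.ne⟩
  have hle : G ≤ X := fun x y h => ((hadj x y).1 h).1
  by_cases hac : G.IsAcyclic
  · exfalso
    obtain ⟨⟨e, he⟩, hge⟩ := Function.ne_iff.1 hg0
    induction e using Sym2.ind with
    | _ x y =>
      have hxy : G.Adj x y := (hadj x y).2 ⟨he, hge⟩
      have hb := SimpleGraph.isAcyclic_iff_forall_adj_isBridge.1 hac hxy
      rw [SimpleGraph.isBridge_iff] at hb
      set H := G.deleteEdges {s(x, y)} with hH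
      have hb' : ¬ H.Reachable x y := by
        exact hb
      apply hge
      refine aux_single X (fun z => if H.Reachable x z then 1 else 0) g hg _ ?_ ?_
      · simp [auxCut, hb']
      · rintro ⟨e', he'⟩ hne hge'
        induction e' using Sym2.ind with
        | _ a b =>
          have hab : H.Adj a b := by
            rw [hH, SimpleGraph.deleteEdges_adj]
            refine ⟨(hadj a b).2 ⟨he', hge'⟩, ?_⟩
            intro h; exact hne (Subtype.ext h)
          have : H.Reachable x a ↔ H.Reachable x b :=
            ⟨fun h => h.trans hab.reachable, fun h => h.trans hab.symm.reachable⟩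
          simp [auxCut, this, CharTwo.add_self_eq_zero]
  · simp only [SimpleGraph.IsAcyclic, not_forall, not_not] at hac
    obtain ⟨v, w, hw⟩ := hac
    refine ⟨v, w.mapLe hle, hw.mapLe hle, ?_⟩
    rintro ⟨e, he⟩ hew
    rw [SimpleGraph.Walk.edges_mapLe_eq_edges] at hew
    have := w.edges_subset_edgeSet hew
    induction e using Sym2.ind with
    | _ a b => exact ((hadj a b).1 this).2

noncomputable def auxInd {E : Type*} (C : Set E) : E → ZMod 2 := C.indicator 1

theorem auxInd_ne {E : Type*} (C : Set E) (e : E) : auxInd C e ≠ 0 ↔ e ∈ C := by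
  simp [auxInd]

theorem auxInd_cycleVec {V : Type*} [DecidableEq V] (X : SimpleGraph V) {v : V}
    (w : X.Walk v v) : auxInd {e : X.edgeSet | (e : Sym2 V) ∈ w.edges} = cycleVec X w := by
  classical
  funext e
  simp [auxInd, cycleVec, Set.indicator_apply]

theorem auxInd_inj {E : Type*} {C D : Set E} (h : auxInd C = auxInd D) : C = D := by
  ext e; rw [← auxInd_ne, h, auxInd_ne]

theorem auxInd_image {E : Type*} (π : Equiv.Perm E) (C : Set E) :
    LinearMap.funLeft (ZMod 2) (ZMod 2) π (auxInd (π '' C)) = auxInd C := by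
  classical
  funext e
  simp [auxInd, LinearMap.funLeft_apply, Set.indicator_apply]

theorem aux_char {V : Type*} [Fintype V] [DecidableEq V] (X : SimpleGraph V)
    (C : Set X.edgeSet) : IsCycleEdgeSet X C ↔
      C.Nonempty ∧ auxInd C ∈ cycleSpace X ∧
        ∀ D ⊆ C, D.Nonempty → auxInd D ∈ cycleSpace X → D = C := by
  have ne : ∀ D : Set X.edgeSet, D.Nonempty → auxInd D ≠ 0 := by
    rintro D ⟨e, he⟩ h
    exact (auxInd_ne D e).2 he (congrFun h e)
  constructor
  · rintro ⟨v, w, hw, rfl⟩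
    refine ⟨?_, ?_, ?_⟩
    · cases w with
      | nil => simp at hw
      | @cons _ b _ h p => exact ⟨⟨s(v, b), h⟩, by simp⟩
    · rw [auxInd_cycleVec]; exact Submodule.subset_span ⟨v, w, hw, rfl⟩
    · intro D hD hne hm
      apply auxInd_inj
      rw [auxInd_cycleVec]
      exact aux_min X _ hm (ne D hne) w hw fun e he => hD ((auxInd_ne D e).1 he)
  · rintro ⟨hne, hm, hmin⟩
    obtain ⟨v, w, hw, hs⟩ := aux_exists X _ hm (ne C hne)
    refine ⟨v, w, hw, (hmin {e : X.edgeSet | (e : Sym2 V) ∈ w.edges} (fun e he => (auxInd_ne C e).1 (hs e he)) ?_ ?_).symm⟩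
    · cases w with
      | nil => simp at hw
      | @cons _ b _ h p => exact ⟨⟨s(v, b), h⟩, by simp⟩
    · rw [auxInd_cycleVec]; exact Submodule.subset_span ⟨v, w, hw, rfl⟩

theorem aux_gens {V : Type*} [DecidableEq V] (X : SimpleGraph V) :
    {f | ∃ (v : V) (w : X.Walk v v), w.IsCycle ∧ f = cycleVec X w} =
      auxInd '' {C | IsCycleEdgeSet X C} := by
  ext f
  constructor
  · rintro ⟨v, w, hw, rfl⟩
    exact ⟨_, ⟨v, w, hw, rfl⟩, auxInd_cycleVec X w⟩
  · rintro ⟨C, ⟨v, w, hw, rfl⟩, rfl⟩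
    exact ⟨v, w, hw, auxInd_cycleVec X w⟩

/-- Let `X` be a finite simple graph, `B` a cycle basis of `X`, and
`π` a permutation of `E(X)` inducing the coordinate-permuting linear automorphism
`P_π` of `E(X) → ZMod 2`.  Then `π` is an automorphism of the graphic matroid of `X`
(it maps edge sets of cycles to edge sets of cycles in both directions) iff the image
of `B` under `P_π` is a cycle basis of `X`. -/
theorem stmt_8 {V : Type*} [Fintype V] [DecidableEq V] (X : SimpleGraph V)
    (π : Equiv.Perm X.edgeSet) (B : Set (X.edgeSet → ZMod 2)) (hB : IsCycleBasis X B) :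
    (∀ C : Set X.edgeSet, IsCycleEdgeSet X C ↔ IsCycleEdgeSet X (π '' C)) ↔
      IsCycleBasis X (LinearMap.funLeft (ZMod 2) (ZMod 2) π '' B) := by
  have hinj : Function.Injective (LinearMap.funLeft (ZMod 2) (ZMod 2) π) :=
    LinearMap.funLeft_injective_of_surjective _ _ _ π.surjective
  constructor
  · intro h
    have hmap : (cycleSpace X).map (LinearMap.funLeft (ZMod 2) (ZMod 2) π) = cycleSpace X := by
      unfold cycleSpace
      rw [Submodule.map_span, aux_gens]
      congr 1
      ext f
      constructor
      · rintro ⟨_, ⟨C, hC, rfl⟩, rfl⟩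
        have hC' : C = π '' (π ⁻¹' C) := (Set.image_preimage_eq _ π.surjective).symm
        rw [hC', auxInd_image]
        refine ⟨_, ?_, rfl⟩
        show IsCycleEdgeSet X _
        rw [h, ← hC']; exact hC
      · rintro ⟨C, hC, rfl⟩
        exact ⟨_, ⟨_, (h C).1 hC, rfl⟩, auxInd_image π C⟩
    have hspan : Submodule.span (ZMod 2) (LinearMap.funLeft (ZMod 2) (ZMod 2) π '' B)
        = cycleSpace X := by
      rw [Submodule.span_image, hB.2.2, hmap]
    refine ⟨?_, ?_, hspan⟩
    · rw [← hspan]; exact Submodule.subset_span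
    · exact LinearIndepOn.id_image (LinearIndependent.map_injOn hB.2.1 _ hinj.injOn)
  · rintro ⟨-, -, h⟩
    rw [Submodule.span_image, hB.2.2] at h
    have hmem : ∀ C : Set X.edgeSet,
        auxInd (π '' C) ∈ cycleSpace X ↔ auxInd C ∈ cycleSpace X := by
      intro C
      rw [← auxInd_image π C]
      conv_rhs => rw [← h]
      exact ⟨fun hx => ⟨_, hx, rfl⟩, fun ⟨y, hy, hxy⟩ => hinj hxy ▸ hy⟩
    intro C
    rw [aux_char, aux_char, hmem, Set.image_nonempty]
    refine and_congr_right fun _ => and_congr_right fun _ => ?_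
    constructor
    · intro H D hD hne hm
      have hD' : D = π '' (π ⁻¹' D) := (Set.image_preimage_eq _ π.surjective).symm
      rw [hD'] at hD hne hm ⊢
      rw [H _ ((Set.image_subset_image_iff π.injective).1 hD) (Set.image_nonempty.1 hne)
        ((hmem _).1 hm)]
    · intro H D hD hne hm
      exact π.injective.image_injective
        (H _ (Set.image_mono hD) (hne.image _) ((hmem _).2 hm))
end

section
/- Let F be a field, m ≥ 1, m′ ≥ m, and let e₁, …, e_m ∈ F^m with e₁ ≠ 0. Working in F^m × F^{m′}, define f_i = (e_i, 0) for 1 ≤ i ≤ m, and for 1 ≤ j ≤ m′ define g_j = (u_j, d_j), where u_j = (e₁)_j · δ_j ∈ F^m for j ≤ m (δ_j the j-th standard basis vector) and u_j = 0 for j > m, and d₁, …, d_{m′} ∈ F^{m′} are the cyclic difference vectors. Then for all distinct indices i₂, …, i_k ∈ {2, …, m}: the set {e₁, e_{i₂}, …, e_{i_k}} is minimally linearly dependent if and only if both {f₁, f_{i₂}, …, f_{i_k}} is minimally linearly dependent and {f_{i₂}, …, f_{i_k}, g₁, …, g_{m′}} is minimally linearly dependent. -/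
/-- A family of vectors is minimally linearly dependent (a circuit): it is linearly
dependent but every proper subfamily is linearly independent. -/
def MinLinearDep (F : Type*) [Field F] {ι V : Type*} [AddCommGroup V] [Module F V]
    (v : ι → V) : Prop :=
  ¬ LinearIndependent F v ∧
    ∀ S : Set ι, S ≠ Set.univ → LinearIndependent F (fun s : S => v s.1)

theorem minLinearDep_iff_aux {F : Type*} [Field F] {ι V : Type*} [Fintype ι] [AddCommGroup V]
    [Module F V] (v : ι → V) :
    MinLinearDep F v ↔ (∃ c : ι → F, ∑ i, c i • v i = 0 ∧ c ≠ 0) ∧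
      ∀ c : ι → F, ∑ i, c i • v i = 0 → (∃ i, c i = 0) → c = 0 := by
  classical
  unfold MinLinearDep
  apply and_congr
  · rw [Fintype.linearIndependent_iff]
    push Not
    constructor
    · rintro ⟨c, h, i, hi⟩
      exact ⟨c, h, fun h0 => hi (by simp [h0])⟩
    · rintro ⟨c, h, h0⟩
      exact ⟨c, h, Function.ne_iff.1 h0⟩
  · constructor
    · rintro H c hc ⟨i, hi⟩
      have h1 := H {j | j ≠ i} (fun h => by
        have : i ∈ {j | j ≠ i} := h ▸ Set.mem_univ i
        simp at this)
      rw [Fintype.linearIndependent_iff] at h1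
      have h2 := h1 (fun s => c s.1) (by
        rw [← hc]
        refine (Finset.sum_subtype (Finset.univ.erase i) (p := fun j => j ∈ {j | j ≠ i})
          (by simp) (fun j => c j • v j)).symm.trans ?_
        rw [← Finset.add_sum_erase Finset.univ _ (Finset.mem_univ i), hi]
        simp)
      ext j
      by_cases hj : j = i
      · simp [hj, hi]
      · exact h2 ⟨j, hj⟩
    · intro H S hS
      obtain ⟨i, hi⟩ := (Set.ne_univ_iff_exists_notMem S).1 hS
      rw [Fintype.linearIndependent_iff]
      intro c hc s
      have := H (fun j => if h : j ∈ S then c ⟨j, h⟩ else 0) (by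
        rw [← hc]
        rw [← Finset.sum_subset (Finset.subset_univ S.toFinset)]
        · rw [← Finset.sum_coe_sort]
          refine Fintype.sum_equiv (Equiv.subtypeEquivRight (by simp)) _ _ ?_
          rintro ⟨x, hx⟩
          have hx' : x ∈ S := by simpa using hx
          simp [hx']
          rfl
        · intro x _ hx
          have hx' : x ∉ S := by simpa using hx
          simp [hx']) ⟨i, by simp [hi]⟩
      have h3 := congrFun this s.1
      simpa using h3

theorem cyc_const_aux {F : Type*} (n : ℕ) [NeZero n] (b : Fin n → F)
    (h : ∀ i, b i = b (i + 1)) (j : Fin n) : b j = b 0 := by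
  have key : ∀ k : ℕ, b (Fin.ofNat n k) = b 0 := by
    intro k
    induction k with
    | zero => congr 1
    | succ k ih =>
      rw [← ih, h (Fin.ofNat n k)]
      congr 1
      ext
      simp [Fin.ofNat, Fin.val_add]
  have := key j
  rwa [Fin.ofNat_val_eq_self] at this

/-- Let `F` be a field, `1 ≤ m ≤ m'`, and `e₁, …, e_m ∈ F^m` with
`e₁ ≠ 0`.  In `F^m × F^{m'}` set `fᵢ = (eᵢ, 0)` and `g j = (u j, d j)`, where
`u j = (e₁)_j • δ_j` for `j ≤ m` and `u j = 0` for `j > m`, and `d₁, …, d_{m'}` are the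
cyclic difference vectors of `F^{m'}`.  Then for all distinct indices
`i₂, …, i_k ∈ {2, …, m}`: the family `{e₁, e_{i₂}, …, e_{i_k}}` is minimally linearly
dependent iff both `{f₁, f_{i₂}, …, f_{i_k}}` and
`{f_{i₂}, …, f_{i_k}, g₁, …, g_{m'}}` are minimally linearly dependent. -/
theorem stmt_12 {F : Type*} [Field F] (m m' : ℕ) [NeZero m] [NeZero m'] (hm : 1 ≤ m)
    (hmm' : m ≤ m') (e : Fin m → (Fin m → F)) (he : e 0 ≠ 0)
    (d : Fin m' → (Fin m' → F))
    (hd : ∀ j i : Fin m', d j i = if i = j then 1 else if i = j - 1 then -1 else 0)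
    (u : Fin m' → (Fin m → F))
    (hu : ∀ (j : Fin m') (i : Fin m), u j i = if (i : ℕ) = (j : ℕ) then e 0 i else 0)
    (fvec : Fin m → (Fin m → F) × (Fin m' → F)) (hf : ∀ i, fvec i = (e i, 0))
    (g : Fin m' → (Fin m → F) × (Fin m' → F)) (hg : ∀ j, g j = (u j, d j))
    (r : ℕ) (idx : Fin r → Fin m) (hinj : Function.Injective idx)
    (hne : ∀ t, idx t ≠ 0) :
    MinLinearDep F (fun o : Option (Fin r) => o.elim (e 0) (fun t => e (idx t))) ↔
      (MinLinearDep F (fun o : Option (Fin r) => o.elim (fvec 0) (fun t => fvec (idx t))) ∧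
        MinLinearDep F (Sum.elim (fun t : Fin r => fvec (idx t)) g)) := by
  have hA : MinLinearDep F (fun o : Option (Fin r) => o.elim (fvec 0) (fun t => fvec (idx t))) ↔
      MinLinearDep F (fun o : Option (Fin r) => o.elim (e 0) (fun t => e (idx t))) := by
    have hz : ∀ c : Option (Fin r) → F,
        ∑ o, c o • (o.elim (fvec 0) (fun t => fvec (idx t)) : (Fin m → F) × (Fin m' → F)) = 0 ↔
        ∑ o, c o • (o.elim (e 0) (fun t => e (idx t)) : Fin m → F) = 0 := by
      intro c
      simp [Fintype.sum_option, hf, Prod.ext_iff, Prod.fst_sum, Prod.snd_sum]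
    rw [minLinearDep_iff_aux, minLinearDep_iff_aux]
    simp only [hz]
  rw [hA]
  refine ⟨fun h => ⟨h, ?_⟩, fun h => h.1⟩
  rw [minLinearDep_iff_aux] at h ⊢
  simp only [Fintype.sum_option, Option.elim] at h
  obtain ⟨⟨c, hc, hc0⟩, hmin⟩ := h
  have hm2 : 2 ≤ m' := by
    by_contra hlt
    have hm1 : m = 1 := by omega
    have hs : Subsingleton (Fin m) := by subst hm1; infer_instance
    have hr : IsEmpty (Fin r) := ⟨fun t => hne t (Subsingleton.elim _ _)⟩
    simp [he] at hc
    apply hc0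
    ext o
    rcases o with _ | t
    · exact hc
    · exact hr.elim t
  have hone : ∀ i : Fin m', i + 1 ≠ i := by
    intro i hi
    have h1 : (1 : Fin m') = 0 := by simpa using hi
    have h2 := congrArg Fin.val h1
    rw [Fin.val_one', Nat.mod_eq_of_lt (by omega)] at h2
    simp at h2
  have hdsum : ∀ (b : Fin m' → F) (i : Fin m'), (∑ j, b j • d j) i = b i - b (i + 1) := by
    intro b i
    have h1 : ∀ j, b j * d j i = (if j = i then b j else 0) + (if j = i + 1 then - b j else 0) := by
      intro j
      rw [hd]
      have e1 : i = j - 1 ↔ j = i + 1 := by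
        rw [eq_sub_iff_add_eq]
        exact eq_comm
      simp only [e1]
      by_cases h1 : i = j
      · subst h1
        simp [(hone i).symm]
      · by_cases h2 : j = i + 1
        · simp [h2, hone]
          intro h
          omega
        · simp [h1, h2, Ne.symm h1]
    simp only [Finset.sum_apply, Pi.smul_apply, smul_eq_mul, h1, Finset.sum_add_distrib]
    simp [sub_eq_add_neg]
  have husum : ∀ β : F, ∑ j, β • u j = β • e 0 := by
    intro β
    ext i
    simp only [Finset.sum_apply, Pi.smul_apply, smul_eq_mul, hu]
    rw [Finset.sum_eq_single (Fin.castLE hmm' i)]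
    · simp
    · intro j _ hj
      rw [if_neg, mul_zero]
      intro h
      exact hj (Fin.ext h.symm)
    · simp
  have hrel : ∀ w : Fin r ⊕ Fin m' → F,
      ∑ x, w x • (Sum.elim (fun t : Fin r => fvec (idx t)) g x) = 0 ↔
      (∀ j, w (Sum.inr j) = w (Sum.inr 0)) ∧
        w (Sum.inr 0) • e 0 + ∑ t, w (Sum.inl t) • e (idx t) = 0 := by
    intro w
    have h0 : ∑ x, w x • (Sum.elim (fun t : Fin r => fvec (idx t)) g x) = 0 ↔
        (∑ t, w (Sum.inl t) • e (idx t) + ∑ j, w (Sum.inr j) • u j = 0) ∧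
          ∑ j, w (Sum.inr j) • d j = 0 := by
      simp [Fintype.sum_sum_type, hf, hg, Prod.ext_iff, Prod.fst_sum, Prod.snd_sum]
    have h1 : ∑ j, w (Sum.inr j) • d j = 0 ↔ ∀ j, w (Sum.inr j) = w (Sum.inr 0) := by
      constructor
      · intro h
        apply cyc_const_aux m' (fun j => w (Sum.inr j))
        intro i
        have := hdsum (fun j => w (Sum.inr j)) i
        rw [h] at this
        exact sub_eq_zero.1 this.symm
      · intro h
        ext i
        rw [hdsum (fun j => w (Sum.inr j)) i, h i, h (i + 1)]
        simp
    rw [h0, h1, and_comm]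
    apply and_congr_right
    intro h
    simp only [h]
    rw [husum, add_comm]
  refine ⟨⟨Sum.elim (fun t => c (some t)) (fun _ => c none), (hrel _).2 ⟨by simp, by simpa using hc⟩,
    fun h => hc0 ?_⟩, ?_⟩
  · ext o
    rcases o with _ | t
    · simpa using congrFun h (Sum.inr 0)
    · simpa using congrFun h (Sum.inl t)
  · intro w hw hx
    obtain ⟨hb, hw⟩ := (hrel w).1 hw
    have h1 := hmin (fun o => o.elim (w (Sum.inr 0)) (fun t => w (Sum.inl t))) (by simpa using hw) (by
      obtain ⟨x, hx⟩ := hx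
      rcases x with t | j
      · exact ⟨some t, hx⟩
      · exact ⟨none, by simpa [hb j] using hx⟩)
    ext x
    rcases x with t | j
    · exact congrFun h1 (some t)
    · rw [hb j]
      exact congrFun h1 none
end
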